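/- Let V be a vertex operator algebra and W any weak V-module. Then the full dual space W* is a module for the Lie algebra g(V) = (V ⊗ ℂ[t,t^{−1}]) / im(L(−1)⊗1 + 1⊗d/dt), where v(n) acts on W* as the operator v*_n (the coefficient of x^{−n−1} in Y*(v,x)). -/

import Mathlib

noncomputable section

/-- The generalized binomial coefficient `C(m, i)` for `m ∈ ℤ`, `i ∈ ℕ`,
as a complex number: `m(m-1)⋯(m-i+1)/i!`. -/
def cchoose (m : ℤ) (i : ℕ) : ℂ :=
  (∏ j ∈ Finset.range i, ((m : ℂ) - (j : ℂ))) / (Nat.factorial i : ℂ)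

/-- A vertex operator algebra `V = ⊕ₙ V₍ₙ₎` over `ℂ`.  The vertex operator map is
recorded through its modes `op u n v = uₙ v` (so `Y(u,x)v = Σₙ uₙv x^{-n-1}`), with
vacuum `one`, conformal vector `omega` (with `L(k) = ω_{k+1}`), central charge `cc`,
weight grading `wtSpace` with projections `proj`.  The Jacobi identity is recorded in
the equivalent form of the Borcherds identity on modes. -/
structure VOA where
  carrier : Type
  [grp : AddCommGroup carrier]
  [mdl : Module ℂ carrier]
  op : carrier → ℤ → carrier → carrier
  one : carrier
  omega : carrier
  wtSpace : ℤ → Submodule ℂ carrier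
  proj : ℤ → carrier → carrier
  cc : ℂ
  op_linear_left : ∀ (n : ℤ) (w : carrier), IsLinearMap ℂ fun u => op u n w
  op_linear_right : ∀ (u : carrier) (n : ℤ), IsLinearMap ℂ (op u n)
  trunc : ∀ u v : carrier, ∃ N : ℤ, ∀ n : ℤ, N ≤ n → op u n v = 0
  one_op : ∀ (n : ℤ) (v : carrier), op one n v = if n = -1 then v else 0
  create_nonneg : ∀ (v : carrier) (n : ℤ), 0 ≤ n → op v n one = 0
  create : ∀ v : carrier, op v (-1) one = v
  borcherds : ∀ (u v w : carrier) (l m n : ℤ),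
    (∑ᶠ i : ℕ, cchoose m i • op (op u (l + (i : ℤ)) v) (m + n - (i : ℤ)) w)
      = ∑ᶠ i : ℕ, ((-1 : ℂ) ^ i * cchoose l i) •
          (op u (l + m - (i : ℤ)) (op v (n + (i : ℤ)) w)
            - ((-1 : ℂ) ^ l) • op v (l + n - (i : ℤ)) (op u (m + (i : ℤ)) w))
  proj_linear : ∀ n : ℤ, IsLinearMap ℂ (proj n)
  proj_mem : ∀ (n : ℤ) (v : carrier), proj n v ∈ wtSpace n
  proj_eq : ∀ n : ℤ, ∀ v ∈ wtSpace n, proj n v = v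
  proj_ne : ∀ m n : ℤ, m ≠ n → ∀ v ∈ wtSpace m, proj n v = 0
  proj_finite : ∀ v : carrier, (Function.support fun n => proj n v).Finite
  proj_sum : ∀ v : carrier, (∑ᶠ n : ℤ, proj n v) = v
  fd : ∀ n : ℤ, FiniteDimensional ℂ (wtSpace n)
  lower_trunc : ∃ N : ℤ, ∀ n : ℤ, n < N → wtSpace n = ⊥
  one_wt : one ∈ wtSpace 0
  omega_wt : omega ∈ wtSpace 2
  op_wt : ∀ k m n : ℤ, ∀ u ∈ wtSpace k, ∀ v ∈ wtSpace m, op u n v ∈ wtSpace (k + m - n - 1)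
  L_zero : ∀ n : ℤ, ∀ v ∈ wtSpace n, op omega 1 v = (n : ℂ) • v
  L_neg_one : ∀ (u : carrier) (n : ℤ) (w : carrier),
    op (op omega 0 u) n w = (-(n : ℂ)) • op u (n - 1) w
  virasoro : ∀ (m n : ℤ) (v : carrier),
    op omega (m + 1) (op omega (n + 1) v) - op omega (n + 1) (op omega (m + 1) v)
      = ((m : ℂ) - (n : ℂ)) • op omega (m + n + 1) v
        + (if m + n = 0 then (((m : ℂ) ^ 3 - (m : ℂ)) / 12) * cc else 0) • v

attribute [instance] VOA.grp VOA.mdl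

namespace VOA

variable (V : VOA)

/-- The Virasoro operator `L(k) = ω_{k+1}`. -/
def L (k : ℤ) (v : V.carrier) : V.carrier := V.op V.omega (k + 1) v

/-- The positive-weight part `V₊ = ⊕_{n ≥ 1} V₍ₙ₎`. -/
def pos : Submodule ℂ V.carrier := ⨆ (n : ℤ) (_ : 1 ≤ n), V.wtSpace n

/-- Zhu's subspace `C₂(V) = span{u₋₂v : u, v ∈ V}`. -/
def C2 : Submodule ℂ V.carrier :=
  Submodule.span ℂ {x : V.carrier | ∃ u v : V.carrier, x = V.op u (-2) v}

/-- The subspace `C₁(V) = span(v₋₁V₊ (v ∈ V₊) together with L(-1)V)`. -/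
def C1 : Submodule ℂ V.carrier :=
  Submodule.span ℂ
    ({x : V.carrier | ∃ u ∈ V.pos, ∃ v ∈ V.pos, x = V.op u (-1) v}
      ∪ {x : V.carrier | ∃ v : V.carrier, x = V.op V.omega 0 v})

/-- Iterated application of modes: `iterApply [(u¹,n₁),…,(uʳ,n_r)] w = u¹_{n₁} ⋯ uʳ_{n_r} w`. -/
def iterApply : List (V.carrier × ℤ) → V.carrier → V.carrier
  | [], w => w
  | p :: l, w => V.op p.1 p.2 (iterApply l w)

/-- `U ⊆ V` generates `V` as a vertex operator algebra:  `V` is linearly spanned by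
the elements `u¹_{n₁} ⋯ uʳ_{n_r} 1` with `uⁱ ∈ U`, `n_i ∈ ℤ`. -/
def generates (U : Set V.carrier) : Prop :=
  Submodule.span ℂ {x : V.carrier | ∃ l : List (V.carrier × ℤ),
    (∀ p ∈ l, p.1 ∈ U) ∧ x = V.iterApply l V.one} = ⊤

/-- `V` is finitely generated as a vertex operator algebra. -/
def FinitelyGenerated : Prop := ∃ S : Finset V.carrier, V.generates ↑S

end VOA

/-- A weak `V`-module: all axioms of a module (truncation, vacuum, Jacobi identity in
Borcherds form) except those involving gradings. -/
structure WeakModule (V : VOA) where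
  carrier : Type
  [grp : AddCommGroup carrier]
  [mdl : Module ℂ carrier]
  op : V.carrier → ℤ → carrier → carrier
  op_linear_left : ∀ (n : ℤ) (w : carrier), IsLinearMap ℂ fun u => op u n w
  op_linear_right : ∀ (u : V.carrier) (n : ℤ), IsLinearMap ℂ (op u n)
  trunc : ∀ (u : V.carrier) (w : carrier), ∃ N : ℤ, ∀ n : ℤ, N ≤ n → op u n w = 0
  one_op : ∀ (n : ℤ) (w : carrier), op V.one n w = if n = -1 then w else 0
  borcherds : ∀ (u v : V.carrier) (w : carrier) (l m n : ℤ),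
    (∑ᶠ i : ℕ, cchoose m i • op (V.op u (l + (i : ℤ)) v) (m + n - (i : ℤ)) w)
      = ∑ᶠ i : ℕ, ((-1 : ℂ) ^ i * cchoose l i) •
          (op u (l + m - (i : ℤ)) (op v (n + (i : ℤ)) w)
            - ((-1 : ℂ) ^ l) • op v (l + n - (i : ℤ)) (op u (m + (i : ℤ)) w))

attribute [instance] WeakModule.grp WeakModule.mdl

namespace WeakModule

variable {V : VOA} (W : WeakModule V)

/-- `L(0)` acting on a weak module, as a linear map. -/
def L0 : W.carrier →ₗ[ℂ] W.carrier := IsLinearMap.mk' _ (W.op_linear_right V.omega 1)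

/-- The `L(0)`-eigenspace of eigenvalue `h`. -/
def eig (h : ℂ) : Submodule ℂ W.carrier :=
  LinearMap.ker (W.L0 - h • (LinearMap.id : W.carrier →ₗ[ℂ] W.carrier))

/-- The coefficient `v*ₙ` of the adjoint vertex operator
`⟨Y*(v,x)α, w⟩ = ⟨α, Y(e^{xL(1)}(-x^{-2})^{L(0)}v, x^{-1})w⟩` acting on the full dual
space: for `v` homogeneous of weight `h`,
`(v*ₙ α)(w) = (-1)^h Σ_{i≥0} (1/i!) α((L(1)^i v)_{2h-n-i-2} w)`, extended to general
`v` via the weight-space projections. -/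
def dmode (v : V.carrier) (n : ℤ) (α : W.carrier → ℂ) (w : W.carrier) : ℂ :=
  ∑ᶠ h : ℤ, ∑ᶠ i : ℕ,
    ((-1 : ℂ) ^ h / (Nat.factorial i : ℂ)) *
      α (W.op ((V.L 1)^[i] (V.proj h v)) (2 * h - n - (i : ℤ) - 2) w)

/-- `D(W) ⊆ W*`: the linear functionals `α` on `W` such that for every `v ∈ V`,
`Y*(v,x)α ∈ W*((x))`, i.e. `v*ₙ α = 0` for `n` sufficiently large. -/
def DW : Set (W.carrier → ℂ) :=
  {α | IsLinearMap ℂ α ∧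
    ∀ v : V.carrier, ∃ N : ℤ, ∀ n : ℤ, N ≤ n → ∀ w : W.carrier, W.dmode v n α w = 0}

/-- A subspace stable under all modes of all vertex operators, i.e. a `V`-submodule. -/
def IsStable (S : Submodule ℂ W.carrier) : Prop :=
  ∀ (v : V.carrier) (n : ℤ), ∀ m ∈ S, W.op v n m ∈ S

/-- An irreducible (nonzero, no proper nonzero stable subspaces) `V`-submodule. -/
def IsIrreducibleSub (S : Submodule ℂ W.carrier) : Prop :=
  S ≠ ⊥ ∧ W.IsStable S ∧
    ∀ T : Submodule ℂ W.carrier, W.IsStable T → T ≤ S → T = ⊥ ∨ T = S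

/-- A stable subspace which is an ordinary module: `L(0)` acts semisimply on it with
finite-dimensional eigenspaces, and for each `h` the eigenvalues `h + m` do not occur
for `m` a sufficiently negative integer. -/
def IsOrdinarySub (S : Submodule ℂ W.carrier) : Prop :=
  S ≤ (⨆ h : ℂ, W.eig h ⊓ S) ∧ (∀ h : ℂ, FiniteDimensional ℂ ↥(W.eig h ⊓ S)) ∧
    ∀ h : ℂ, ∃ N : ℤ, ∀ m : ℤ, m ≤ N → W.eig (h + (m : ℂ)) ⊓ S = ⊥

/-- The weak module `W` is irreducible. -/
def IsIrreducible : Prop :=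
  (⊥ : Submodule ℂ W.carrier) ≠ ⊤ ∧
    ∀ S : Submodule ℂ W.carrier, W.IsStable S → S = ⊥ ∨ S = ⊤

/-- `Cₙ(W) = span{v₋ₙw : v ∈ V, w ∈ W}`. -/
def Cn (n : ℤ) : Submodule ℂ W.carrier :=
  Submodule.span ℂ {x : W.carrier | ∃ (v : V.carrier) (w : W.carrier), x = W.op v (-n) w}

/-- `B(W) = span(u₋₁W (u ∈ V₊) together with v₀W (v homogeneous, wt v ≥ 2))`. -/
def BW : Submodule ℂ W.carrier :=
  Submodule.span ℂ
    ({x : W.carrier | ∃ v ∈ V.pos, ∃ w : W.carrier, x = W.op v (-1) w}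
      ∪ {x : W.carrier | ∃ k : ℤ, 2 ≤ k ∧ ∃ v ∈ V.wtSpace k, ∃ w : W.carrier, x = W.op v 0 w})

/-- Zhu's subspace `O(W) = span{Σ_{i≥0} C(wt v, i) v_{i-2} w}` so that `A(W) = W/O(W)`. -/
def OW : Submodule ℂ W.carrier :=
  Submodule.span ℂ
    {x : W.carrier | ∃ (k : ℤ) (v : V.carrier), v ∈ V.wtSpace k ∧
      ∃ w : W.carrier, x = ∑ᶠ i : ℕ, cchoose k i • W.op v ((i : ℤ) - 2) w}

/-- A subspace `T ⊇ O(W)` of `W` is closed under the Frenkel–Zhu left and right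
`A(V)`-actions `v * w = Σᵢ C(wt v, i) v_{i-1} w` and `w * v = Σᵢ C(wt v - 1, i) v_{i-1} w`;
for `T ⊇ O(W)` this expresses that `T/O(W)` is an `A(V)`-sub-bimodule of `A(W)`. -/
def BimoduleClosed (T : Submodule ℂ W.carrier) : Prop :=
  ∀ k : ℤ, ∀ v ∈ V.wtSpace k, ∀ w ∈ T,
    (∑ᶠ i : ℕ, cchoose k i • W.op v ((i : ℤ) - 1) w) ∈ T ∧
    (∑ᶠ i : ℕ, cchoose (k - 1) i • W.op v ((i : ℤ) - 1) w) ∈ T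

/-- Equivalence (isomorphism) of weak modules. -/
def Equiv (M N : WeakModule V) : Prop :=
  ∃ e : M.carrier ≃ₗ[ℂ] N.carrier,
    ∀ (v : V.carrier) (n : ℤ) (w : M.carrier), e (M.op v n w) = N.op v n (e w)

end WeakModule

/-- `V` is of class 𝒜: `L(0)` acts semisimply on every weak `V`-module. -/
def VOA.classA (V : VOA) : Prop :=
  ∀ M : WeakModule V, (⨆ h : ℂ, M.eig h) = ⊤

/-- `V` is regular: every weak `V`-module is a direct sum of irreducible ordinary
`V`-modules. -/
def VOA.regular (V : VOA) : Prop :=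
  ∀ M : WeakModule V, ∃ (ι : Type) (S : ι → Submodule ℂ M.carrier),
    (∀ i, M.IsIrreducibleSub (S i) ∧ M.IsOrdinarySub (S i)) ∧
    (∀ i, Disjoint (S i) (⨆ (j : ι) (_ : j ≠ i), S j)) ∧ (⨆ i, S i) = ⊤

/-- A generalized `V`-module: a weak module with a semisimple `L(0)`-action, graded by
the `L(0)`-eigenvalues, with weight-space projections `projW`. -/
structure GenModule (V : VOA) extends WeakModule V where
  wt : ℂ → Submodule ℂ carrier
  projW : ℂ → carrier → carrier
  projW_linear : ∀ h : ℂ, IsLinearMap ℂ (projW h)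
  projW_mem : ∀ (h : ℂ) (w : carrier), projW h w ∈ wt h
  projW_eq : ∀ h : ℂ, ∀ w ∈ wt h, projW h w = w
  projW_ne : ∀ g h : ℂ, g ≠ h → ∀ w ∈ wt g, projW h w = 0
  projW_finite : ∀ w : carrier, (Function.support fun h => projW h w).Finite
  projW_sum : ∀ w : carrier, (∑ᶠ h : ℂ, projW h w) = w
  wt_L0 : ∀ h : ℂ, ∀ w ∈ wt h, op V.omega 1 w = h • w
  wt_op : ∀ k : ℤ, ∀ v ∈ V.wtSpace k, ∀ (h : ℂ) (n : ℤ), ∀ w ∈ wt h,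
    op v n w ∈ wt (h + (k : ℂ) - (n : ℂ) - 1)

/-- An ordinary `V`-module: a generalized module whose weight spaces are
finite-dimensional and whose weights are truncated from below in each coset `h + ℤ`. -/
structure OrdModule (V : VOA) extends GenModule V where
  wt_fd : ∀ h : ℂ, FiniteDimensional ℂ ↥(wt h)
  wt_lower : ∀ h : ℂ, ∃ N : ℤ, ∀ m : ℤ, m ≤ N → wt (h + (m : ℂ)) = ⊥

namespace GenModule

variable {V : VOA} (W : GenModule V)

/-- `W₊ = ⊕_{Re h > 0} W₍ₕ₎`. -/
def posW : Submodule ℂ W.carrier := ⨆ (h : ℂ) (_ : 0 < h.re), W.wt h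

/-- `C₁(W) = span(v₋₁W₊ (v ∈ V₊) together with L(-1)W)`. -/
def C1W : Submodule ℂ W.carrier :=
  Submodule.span ℂ
    ({x : W.carrier | ∃ v ∈ V.pos, ∃ w ∈ W.posW, x = W.op v (-1) w}
      ∪ {x : W.carrier | ∃ w : W.carrier, x = W.op V.omega 0 w})

/-- The restricted dual `W' = ⊕ₕ W₍ₕ₎* ⊆ W*`: the linear functionals vanishing on all
but finitely many weight spaces. -/
def restrictedDual : Set (W.carrier → ℂ) :=
  {α | IsLinearMap ℂ α ∧ {h : ℂ | ∃ w ∈ W.wt h, α w ≠ 0}.Finite}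

end GenModule

/-- `D(W)⁰`: the sum of the `L(0)`-eigenspaces of the weak module `D(W) ⊆ W*`, where
`L*(0) = ω*₁` acts on `α ∈ W*` by `(L*(0)α)(w) = α(L(0)w)`. -/
def OrdModule.DW0 {V : VOA} (W : OrdModule V) : Set (W.carrier → ℂ) :=
  {α | ∃ (S : Finset ℂ) (f : ℂ → (W.carrier → ℂ)),
    (∀ h ∈ S, f h ∈ W.toWeakModule.DW ∧
      ∀ w : W.carrier, f h (W.op V.omega 1 w) = h * f h w) ∧
    α = ∑ h ∈ S, f h}

/-- An ℕ-gradable weak `V`-module: a weak module with an ℕ-grading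
`W = ⊕_{n∈ℕ} W(n)` with `v_m W(n) ⊆ W(wt v + n - m - 1)` (graded pieces of negative
index are zero). -/
structure NGradedModule (V : VOA) extends WeakModule V where
  gr : ℤ → Submodule ℂ carrier
  gr_neg : ∀ n : ℤ, n < 0 → gr n = ⊥
  gr_sup : (⨆ n : ℤ, gr n) = ⊤
  gr_indep : ∀ n : ℤ, Disjoint (gr n) (⨆ (m : ℤ) (_ : m ≠ n), gr m)
  gr_op : ∀ k : ℤ, ∀ v ∈ V.wtSpace k, ∀ m n : ℤ, ∀ w ∈ gr n,
    op v m w ∈ gr (k + n - m - 1)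

/-- An intertwining operator of type `(W₃; W₁ W₂)` in the sense of
Frenkel–Huang–Lepowsky, recorded through its complex-indexed modes
`I w₁ h w₂ = (w₁)ₕ w₂` (so `Y(w₁,x)w₂ = Σ_{h∈ℂ} (w₁)ₕ w₂ x^{-h-1}`):
linearity, truncation, the `L(-1)`-derivative property, and the Jacobi identity in
component (Borcherds) form. -/
def IsIntertwiner {V : VOA} (W1 W2 W3 : OrdModule V)
    (I : W1.carrier → ℂ → W2.carrier → W3.carrier) : Prop :=
  (∀ (h : ℂ) (w2 : W2.carrier), IsLinearMap ℂ fun w1 => I w1 h w2) ∧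
  (∀ (w1 : W1.carrier) (h : ℂ), IsLinearMap ℂ (I w1 h)) ∧
  (∀ (w1 : W1.carrier) (w2 : W2.carrier) (h : ℂ),
    ∃ N : ℤ, ∀ n : ℤ, N ≤ n → I w1 (h + (n : ℂ)) w2 = 0) ∧
  (∀ (w1 : W1.carrier) (h : ℂ) (w2 : W2.carrier),
    I (W1.op V.omega 0 w1) h w2 = (-h) • I w1 (h - 1) w2) ∧
  (∀ (u : V.carrier) (w1 : W1.carrier) (w2 : W2.carrier) (l m : ℤ) (h : ℂ),
    (∑ᶠ i : ℕ, cchoose m i • I (W1.op u (l + (i : ℤ)) w1) ((m : ℂ) + h - (i : ℂ)) w2)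
      = ∑ᶠ i : ℕ, ((-1 : ℂ) ^ i * cchoose l i) •
          (W3.op u (l + m - (i : ℤ)) (I w1 (h + (i : ℂ)) w2)
            - ((-1 : ℂ) ^ l) • I w1 ((l : ℂ) + h - (i : ℂ)) (W2.op u (m + (i : ℤ)) w2)))

/-- The fusion rule `dim I(W₃; W₁W₂)` is finite: the space of intertwining operators of
the indicated type is finite-dimensional. -/
def FusionFinite {V : VOA} (W1 W2 W3 : OrdModule V) : Prop :=
  FiniteDimensional ℂ
    ↥(Submodule.span ℂ {I : W1.carrier → ℂ → W2.carrier → W3.carrier |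
        IsIntertwiner W1 W2 W3 I})

end


section helpers

open Finset

theorem cchoose_eq (m : ℤ) (i : ℕ) : cchoose m i = ((Ring.choose m i : ℤ) : ℂ) := by
  have h := Ring.descPochhammer_eq_factorial_smul_choose m i
  rw [← Polynomial.eval_eq_smeval, descPochhammer_eval_eq_prod_range] at h
  unfold cchoose
  rw [div_eq_iff (by exact_mod_cast Nat.factorial_ne_zero i)]
  have h2 := congrArg (fun z : ℤ => (z : ℂ)) h
  push_cast [nsmul_eq_mul] at h2
  rw [h2, mul_comm]

theorem cchoose_zero_right (m : ℤ) : cchoose m 0 = 1 := by simp [cchoose]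

theorem cchoose_succ_mul (m : ℤ) (s : ℕ) :
    ((s : ℂ) + 1) * cchoose m (s + 1) = ((m : ℂ) - s) * cchoose m s := by
  unfold cchoose
  rw [prod_range_succ, Nat.factorial_succ]
  have : (Nat.factorial s : ℂ) ≠ 0 := by exact_mod_cast Nat.factorial_ne_zero s
  have : ((s : ℂ) + 1) ≠ 0 := by exact_mod_cast Nat.succ_ne_zero s
  push_cast
  field_simp

theorem cchoose_pascal (m : ℤ) (s : ℕ) :
    cchoose (m + 1) (s + 1) = cchoose m s + cchoose m (s + 1) := by
  simp only [cchoose_eq, Ring.choose_succ_succ]; push_cast; rfl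

theorem cchoose_zero_succ (i : ℕ) : cchoose 0 (i + 1) = 0 := by
  unfold cchoose; rw [prod_range_succ']; simp

theorem cchoose_neg_flip (r : ℤ) (n : ℕ) :
    cchoose (-r) n = (-1) ^ n * cchoose (r + n - 1) n := by
  rw [cchoose_eq, cchoose_eq, Ring.choose_neg]
  simp [Int.negOnePow_def, Units.smul_def]

theorem vandermonde_alt (m Y : ℤ) (j : ℕ) :
    ∑ p ∈ antidiagonal j, (-1 : ℂ) ^ p.1 * cchoose m p.1 * cchoose (Y - p.1) p.2
      = cchoose (Y - m) j := by
  have h : cchoose (m + (j - Y - 1)) j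
      = ∑ p ∈ antidiagonal j, cchoose m p.1 * cchoose (j - Y - 1) p.2 := by
    simp only [cchoose_eq]
    rw [Ring.add_choose_eq j (Commute.all _ _)]
    push_cast; rfl
  have e : Y - m = -(m - Y) := by ring
  rw [e, cchoose_neg_flip, show m - Y + j - 1 = m + (j - Y - 1) by ring, h, mul_sum]
  refine sum_congr rfl fun p hp => ?_
  have hp' : p.1 + p.2 = j := by simpa using hp
  subst hp'
  rw [show Y - (p.1 : ℤ) = -(p.1 - Y) by ring, cchoose_neg_flip]
  rw [show (p.1 : ℤ) - Y + p.2 - 1 = ((p.1 + p.2 : ℕ) : ℤ) - Y - 1 by push_cast; ring, pow_add]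
  ring

theorem sum_flip {M : Type*} [AddCommMonoid M] (n : ℕ) (f : ℕ → ℕ → M)
    (hf : ∀ a b, n ≤ a + b → f a b = 0) :
    ∑ c ∈ range n, ∑ p ∈ antidiagonal c, f p.1 p.2 = ∑ a ∈ range n, ∑ b ∈ range n, f a b := by
  simp only [Finset.Nat.sum_antidiagonal_eq_sum_range_succ, Nat.succ_eq_add_one]
  rw [sum_range_diag_flip]
  refine sum_congr rfl fun a ha => ?_
  refine sum_subset (range_mono (by omega)) fun b _ hb => hf a b ?_
  simp at hb; omega

theorem sum_split {M : Type*} [AddCommMonoid M] (n : ℕ) (F G H : ℕ → ℕ → M)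
    (hF : ∀ a s, a + s = n + 1 → F a s = G a s + H a s) (hG : ∀ a, G a 0 = 0)
    (hH : ∀ s, H 0 s = 0) :
    ∑ p ∈ antidiagonal (n + 1), F p.1 p.2
      = ∑ p ∈ antidiagonal n, (G p.1 (p.2 + 1) + H (p.1 + 1) p.2) := by
  rw [sum_add_distrib]
  have h1 : ∑ p ∈ antidiagonal (n + 1), F p.1 p.2
      = ∑ p ∈ antidiagonal (n + 1), G p.1 p.2 + ∑ p ∈ antidiagonal (n + 1), H p.1 p.2 := by
    rw [← sum_add_distrib]
    exact sum_congr rfl fun p hp => hF _ _ (by simpa using hp)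
  rw [h1, Finset.Nat.sum_antidiagonal_succ', hG, zero_add, Finset.Nat.sum_antidiagonal_succ, hH,
    zero_add]

theorem finsum_range {M : Type*} [AddCommMonoid M] (n : ℕ) (f : ℕ → M)
    (hf : ∀ a, n ≤ a → f a = 0) : ∑ᶠ i, f i = ∑ i ∈ range n, f i := by
  refine finsum_eq_sum_of_support_subset f fun i hi => ?_
  by_contra h
  exact hi (hf i (by simpa using h))

/-- Divided-power Leibniz rule. -/
theorem leibniz {A : Type*} [Ring A] [Algebra ℂ A] (D : A) (X : ℕ → A)
    (hX : ∀ e, D * X e = X e * D + ((e : ℂ) + 1) • X (e + 1)) (c : ℕ) :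
    ((Nat.factorial c : ℂ)⁻¹) • (D ^ c * X 0)
      = ∑ p ∈ antidiagonal c, (Nat.factorial p.2 : ℂ)⁻¹ • (X p.1 * D ^ p.2) := by
  induction c with
  | zero => simp
  | succ c ih =>
    have hc : ((c : ℂ) + 1) ≠ 0 := by exact_mod_cast Nat.succ_ne_zero c
    have hfs : ∀ b : ℕ, (Nat.factorial (b + 1) : ℂ)⁻¹ * ((b : ℂ) + 1) = (Nat.factorial b : ℂ)⁻¹ := by
      intro b
      have : (Nat.factorial b : ℂ) ≠ 0 := by exact_mod_cast Nat.factorial_ne_zero b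
      have : ((b : ℂ) + 1) ≠ 0 := by exact_mod_cast Nat.succ_ne_zero b
      rw [Nat.factorial_succ]; push_cast; field_simp
    refine smul_right_injective A hc ?_
    simp only
    rw [smul_smul, mul_comm, hfs, pow_succ', mul_assoc, ← mul_smul_comm, ih, mul_sum, smul_sum]
    rw [sum_split c
      (fun e b => ((c : ℂ) + 1) • (Nat.factorial b : ℂ)⁻¹ • (X e * D ^ b))
      (fun e b => (b : ℂ) • (Nat.factorial b : ℂ)⁻¹ • (X e * D ^ b))
      (fun e b => (e : ℂ) • (Nat.factorial b : ℂ)⁻¹ • (X e * D ^ b))]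
    · refine sum_congr rfl fun p _ => ?_
      rw [mul_smul_comm, ← mul_assoc, hX, add_mul, smul_add]
      congr 1
      · rw [smul_smul, mul_comm]; push_cast; rw [hfs, mul_assoc, ← pow_succ']
      · rw [smul_mul_assoc, smul_comm]; push_cast; rfl
    · intro a s h
      rw [← add_smul]; congr 1
      have : ((a + s : ℕ) : ℂ) = ((c + 1 : ℕ) : ℂ) := by rw [h]
      push_cast at this; rw [← this]; ring
    · intro a; simp
    · intro a; simp

end helpers

noncomputable section helpers2

open Finset

/-- Modes of `V` as a bilinear map. -/
def VOA.opL (V : VOA) (n : ℤ) : V.carrier →ₗ[ℂ] Module.End ℂ V.carrier :=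
  LinearMap.mk₂ ℂ (fun u w => V.op u n w)
    (fun a b w => (V.op_linear_left n w).map_add a b)
    (fun c a w => (V.op_linear_left n w).map_smul c a)
    (fun a v w => (V.op_linear_right a n).map_add v w)
    (fun c a w => (V.op_linear_right a n).map_smul c w)

theorem VOA.opL_apply (V : VOA) (n : ℤ) (u w : V.carrier) : V.opL n u w = V.op u n w := rfl

/-- Modes of `W` as a bilinear map. -/
def WeakModule.opL {V : VOA} (W : WeakModule V) (n : ℤ) :
    V.carrier →ₗ[ℂ] Module.End ℂ W.carrier :=
  LinearMap.mk₂ ℂ (fun u w => W.op u n w)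
    (fun a b w => (W.op_linear_left n w).map_add a b)
    (fun c a w => (W.op_linear_left n w).map_smul c a)
    (fun a v w => (W.op_linear_right a n).map_add v w)
    (fun c a w => (W.op_linear_right a n).map_smul c w)

theorem WeakModule.opL_apply {V : VOA} (W : WeakModule V) (n : ℤ) (u : V.carrier)
    (w : W.carrier) : W.opL n u w = W.op u n w := rfl

/-- `L(1)` as an endomorphism. -/
def VOA.L1E (V : VOA) : Module.End ℂ V.carrier := V.opL 2 V.omega

theorem VOA.L1_iterate (V : VOA) (i : ℕ) (v : V.carrier) : (V.L 1)^[i] v = (V.L1E ^ i) v := by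
  rw [Module.End.pow_apply]; rfl

theorem rhs_collapse {M : Type*} [AddCommGroup M] [Module ℂ M] (F G : ℕ → M) :
    (∑ᶠ i : ℕ, ((-1 : ℂ) ^ i * cchoose 0 i) • (F i - ((-1 : ℂ) ^ (0 : ℤ)) • G i))
      = F 0 - G 0 := by
  rw [finsum_range 1]
  · simp [cchoose_zero_right]
  · intro a ha
    obtain ⟨b, rfl⟩ := Nat.exists_eq_add_of_le' ha
    simp [cchoose_zero_succ]

theorem WeakModule.comm {V : VOA} (W : WeakModule V) (u v : V.carrier) (m n : ℤ) (M : ℕ)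
    (hM : ∀ j : ℕ, M ≤ j → V.op u j v = 0) :
    W.opL m u * W.opL n v - W.opL n v * W.opL m u
      = ∑ j ∈ range M, cchoose m j • W.opL (m + n - j) (V.op u j v) := by
  ext w
  have h := W.borcherds u v w 0 m n
  rw [rhs_collapse (fun i : ℕ => W.op u (0 + m - (i : ℤ)) (W.op v (n + (i : ℤ)) w))
    (fun i : ℕ => W.op v (0 + n - (i : ℤ)) (W.op u (m + (i : ℤ)) w)), finsum_range M] at h
  · simp only [zero_add, Nat.cast_zero, sub_zero, add_zero] at h
    simp only [LinearMap.sub_apply, Module.End.mul_apply, WeakModule.opL_apply,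
      LinearMap.sum_apply, LinearMap.smul_apply]
    exact h.symm
  · intro a ha
    rw [zero_add, hM a ha, ← W.opL_apply]; simp

theorem cchoose_two_two : cchoose 2 2 = 1 := by
  simp [cchoose, prod_range_succ]; norm_num

theorem cchoose_two_one : cchoose 2 1 = 2 := by
  simp [cchoose]

theorem cchoose_two_big (i : ℕ) (h : 3 ≤ i) : cchoose 2 i = 0 := by
  unfold cchoose
  rw [prod_eq_zero (mem_range.2 (show 2 < i by omega))] <;> simp

theorem VOA.L1_comm (V : VOA) (k n : ℤ) (u : V.carrier) (hu : u ∈ V.wtSpace k) :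
    V.L1E * V.opL n u = V.opL n u * V.L1E + (2 * (k : ℂ) - n - 2) • V.opL (n + 1) u
      + V.opL n (V.L1E u) := by
  ext w
  have h := V.borcherds V.omega u w 0 2 n
  rw [rhs_collapse (fun i : ℕ => V.op V.omega (0 + 2 - (i : ℤ)) (V.op u (n + (i : ℤ)) w))
    (fun i : ℕ => V.op u (0 + n - (i : ℤ)) (V.op V.omega (2 + (i : ℤ)) w)), finsum_range 3] at h
  · simp only [sum_range_succ, sum_range_zero, zero_add, Nat.cast_zero, sub_zero, add_zero,
      cchoose_zero_right, cchoose_two_one, cchoose_two_two, one_smul, Nat.cast_one,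
      Nat.cast_ofNat, V.L_neg_one, V.L_zero k u hu] at h
    rw [← V.opL_apply _ ((k : ℂ) • u), map_smul] at h
    simp only [LinearMap.add_apply, Module.End.mul_apply, VOA.opL_apply,
      LinearMap.smul_apply, VOA.L1E] at h ⊢
    rw [show 2 + n - 1 = n + 1 by ring, show 2 + n - 2 = n by ring] at h
    rw [eq_sub_iff_add_eq] at h
    rw [← h]
    push_cast
    module
  · intro a ha
    rw [cchoose_two_big a ha, zero_smul]

theorem VOA.L1_wt (V : VOA) (k : ℤ) (u : V.carrier) (hu : u ∈ V.wtSpace k) (a : ℕ) :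
    (V.L1E ^ a) u ∈ V.wtSpace (k - a) := by
  induction a with
  | zero => simpa using hu
  | succ a ih =>
    rw [pow_succ', Module.End.mul_apply]
    have := V.op_wt 2 _ 2 _ V.omega_wt _ ih
    rw [show 2 + (k - (a : ℤ)) - 2 - 1 = k - ((a + 1 : ℕ) : ℤ) by push_cast; ring] at this
    exact this

/-- The divided-power commutators of `L(1)` with a mode. -/
def VOA.X (V : VOA) (k i : ℤ) (u : V.carrier) (e : ℕ) : Module.End ℂ V.carrier :=
  ∑ p ∈ antidiagonal e, (cchoose (2 * k - p.1 - i - 2) p.2 * (Nat.factorial p.1 : ℂ)⁻¹) •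
    V.opL (i + p.2) ((V.L1E ^ p.1) u)

theorem VOA.X_comm (V : VOA) (k i : ℤ) (u : V.carrier) (hu : u ∈ V.wtSpace k) (e : ℕ) :
    V.L1E * V.X k i u e = V.X k i u e * V.L1E + ((e : ℂ) + 1) • V.X k i u (e + 1) := by
  unfold VOA.X
  rw [smul_sum (s := antidiagonal (e + 1))]
  rw [sum_split e
    (fun a s => ((e : ℂ) + 1) • (cchoose (2 * k - a - i - 2) s * (Nat.factorial a : ℂ)⁻¹) •
      V.opL (i + s) ((V.L1E ^ a) u))
    (fun a s => ((((a : ℂ) + s) * cchoose (2 * k - a - i - 2) s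
        - a * cchoose (2 * k - a - i - 2 + 1) s) * (Nat.factorial a : ℂ)⁻¹) •
      V.opL (i + s) ((V.L1E ^ a) u))
    (fun a s => ((a * cchoose (2 * k - a - i - 2 + 1) s) * (Nat.factorial a : ℂ)⁻¹) •
      V.opL (i + s) ((V.L1E ^ a) u))]
  · rw [mul_sum, sum_mul, ← sum_add_distrib]
    refine sum_congr rfl fun p _ => ?_
    obtain ⟨a, s⟩ := p
    simp only
    rw [mul_smul_comm, V.L1_comm _ _ _ (V.L1_wt k u hu a), ← Module.End.mul_apply, ← pow_succ',
      smul_add, smul_add, smul_mul_assoc, add_assoc]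
    congr 1
    congr 1
    · rw [smul_smul]
      rw [show i + (s : ℤ) + 1 = i + ((s + 1 : ℕ) : ℤ) by push_cast; ring]
      congr 1
      rw [cchoose_pascal]
      have := cchoose_succ_mul (2 * k - a - i - 2) s
      push_cast at this ⊢
      linear_combination (-(Nat.factorial a : ℂ)⁻¹) * this
    · congr 1
      have h1 : (Nat.factorial a : ℂ) ≠ 0 := by exact_mod_cast Nat.factorial_ne_zero a
      have h2 : ((a : ℂ) + 1) ≠ 0 := by exact_mod_cast Nat.succ_ne_zero a
      rw [show 2 * k - ((a + 1 : ℕ) : ℤ) - i - 2 + 1 = 2 * k - a - i - 2 by push_cast; ring]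
      rw [Nat.factorial_succ]; push_cast; field_simp
  · intro a s h
    rw [← add_smul, smul_smul]; congr 1
    have : ((a + s : ℕ) : ℂ) = ((e + 1 : ℕ) : ℂ) := by rw [h]
    push_cast at this; rw [← this]; ring
  · intro a; simp [cchoose_zero_right]
  · intro a; simp

theorem VOA.L1_pow_op (V : VOA) (k i : ℤ) (u v : V.carrier) (hu : u ∈ V.wtSpace k) (c : ℕ) :
    ((Nat.factorial c : ℂ)⁻¹) • (V.L1E ^ c) (V.op u i v)
      = ∑ p ∈ antidiagonal c, ∑ q ∈ antidiagonal p.1,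
        ((Nat.factorial p.2 : ℂ)⁻¹ *
          (cchoose (2 * k - q.1 - i - 2) q.2 * (Nat.factorial q.1 : ℂ)⁻¹)) •
          V.op ((V.L1E ^ q.1) u) (i + q.2) ((V.L1E ^ p.2) v) := by
  have h := LinearMap.congr_fun (leibniz V.L1E (V.X k i u) (V.X_comm k i u hu) c) v
  have h0 : V.X k i u 0 = V.opL i u := by simp [VOA.X, cchoose_zero_right]
  rw [h0] at h
  simp only [LinearMap.smul_apply, Module.End.mul_apply, V.opL_apply, LinearMap.sum_apply] at h
  rw [h]
  refine sum_congr rfl fun p _ => ?_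
  simp only [VOA.X, LinearMap.sum_apply, smul_sum, LinearMap.smul_apply, smul_smul, V.opL_apply]

/-- Everything vanishes in low weights. -/
theorem VOA.exists_bound (V : VOA) : ∃ N : ℤ, ∀ h : ℤ, h < N → ∀ v ∈ V.wtSpace h, v = 0 := by
  obtain ⟨N, hN⟩ := V.lower_trunc
  refine ⟨N, fun h hh v hv => ?_⟩
  rw [hN h hh] at hv
  simpa using hv

/-- The (linear) adjoint mode on homogeneous vectors, truncated at `M`. -/
def WeakModule.th {V : VOA} (W : WeakModule V) (h n : ℤ) (M : ℕ) (v : V.carrier) :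
    Module.End ℂ W.carrier :=
  ((-1 : ℂ) ^ h) • ∑ i ∈ range M, ((Nat.factorial i : ℂ)⁻¹) •
    W.opL (2 * h - n - i - 2) ((V.L1E ^ i) v)

/-- Main computation. -/
theorem WeakModule.th_comm {V : VOA} (W : WeakModule V) (k l m n : ℤ) (u v : V.carrier)
    (hu : u ∈ V.wtSpace k) (M : ℕ)
    (hM : ∀ a b j : ℕ, M ≤ a + b + j → V.op ((V.L1E ^ a) u) j ((V.L1E ^ b) v) = 0) :
    W.th l n M v * W.th k m M u - W.th k m M u * W.th l n M v
      = ∑ i ∈ range M, cchoose m i • W.th (k + l - i - 1) (m + n - i) M (V.op u i v) := by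
  set P : ℤ := 2 * k + 2 * l - 4 - m - n with hP
  have hL : W.th k m M u * W.th l n M v - W.th l n M v * W.th k m M u
      = ((-1 : ℂ) ^ (k + l)) • ∑ a ∈ range M, ∑ b ∈ range M, ∑ j ∈ range M,
        ((Nat.factorial a : ℂ)⁻¹ * (Nat.factorial b : ℂ)⁻¹ * cchoose (2 * k - a - 2 - m) j) •
        W.opL (P - (a + b + j : ℕ)) (V.op ((V.L1E ^ a) u) j ((V.L1E ^ b) v)) := by
    unfold WeakModule.th
    rw [smul_mul_smul_comm, smul_mul_smul_comm, zpow_add₀ (by norm_num), mul_comm ((-1 : ℂ) ^ l),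
      ← smul_sub]
    congr 1
    rw [sum_mul_sum, sum_mul_sum, sum_comm (s := range M) (t := range M)
      (f := fun i j => (((Nat.factorial i : ℂ)⁻¹) • W.opL (2 * l - n - i - 2) ((V.L1E ^ i) v)) * _),
      ← sum_sub_distrib]
    refine sum_congr rfl fun a _ => ?_
    rw [← sum_sub_distrib]
    refine sum_congr rfl fun b _ => ?_
    rw [smul_mul_smul_comm, smul_mul_smul_comm, mul_comm ((Nat.factorial b : ℂ)⁻¹), ← smul_sub,
      W.comm _ _ _ _ M (fun j hj => hM a b j (by omega)), smul_sum]
    refine sum_congr rfl fun j _ => ?_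
    rw [smul_smul]
    rw [show 2 * k - m - (a : ℤ) - 2 = 2 * k - a - 2 - m by ring,
      show 2 * k - (a : ℤ) - 2 - m + (2 * l - n - b - 2) - j = P - (a + b + j : ℕ) by
        push_cast; ring]
  have hR : ∑ i ∈ range M, cchoose m i • W.th (k + l - i - 1) (m + n - i) M (V.op u i v)
      = -(((-1 : ℂ) ^ (k + l)) • ∑ i ∈ range M, ∑ c ∈ range M, 
        ((-1 : ℂ) ^ i * cchoose m i) • W.opL (P - (i + c : ℕ))
          (((Nat.factorial c : ℂ)⁻¹) • (V.L1E ^ c) (V.op u i v))) := by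
    rw [← smul_neg, ← sum_neg_distrib, smul_sum]
    refine sum_congr rfl fun i _ => ?_
    unfold WeakModule.th
    rw [← sum_neg_distrib, smul_sum, smul_sum, smul_sum]
    refine sum_congr rfl fun c _ => ?_
    rw [map_smul, smul_smul, smul_smul, smul_smul, smul_neg, smul_smul, ← neg_smul]
    rw [show 2 * (k + l - (i : ℤ) - 1) - (m + n - i) - c - 2 = P - (i + c : ℕ) by
      push_cast; ring]
    congr 1
    rw [show k + l - (i : ℤ) - 1 = k + l + -(i : ℤ) + (-1) by ring, zpow_add₀ (by norm_num),
      zpow_add₀ (by norm_num), zpow_neg, zpow_natCast, ← inv_pow]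
    norm_num
    ring
  have hmid : ∑ i ∈ range M, ∑ c ∈ range M, 
        ((-1 : ℂ) ^ i * cchoose m i) • W.opL (P - (i + c : ℕ))
          (((Nat.factorial c : ℂ)⁻¹) • (V.L1E ^ c) (V.op u i v))
      = ∑ a ∈ range M, ∑ b ∈ range M, ∑ j ∈ range M,
        ((Nat.factorial a : ℂ)⁻¹ * (Nat.factorial b : ℂ)⁻¹ * cchoose (2 * k - a - 2 - m) j) •
        W.opL (P - (a + b + j : ℕ)) (V.op ((V.L1E ^ a) u) j ((V.L1E ^ b) v)) := by
    let g : ℕ → ℕ → ℕ → ℕ → Module.End ℂ W.carrier := fun i s a b =>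
      (((-1 : ℂ) ^ i * cchoose m i * cchoose (2 * k - a - i - 2) s) *
        ((Nat.factorial a : ℂ)⁻¹ * (Nat.factorial b : ℂ)⁻¹)) •
        W.opL (P - (a + b + (i + s) : ℕ)) (V.op ((V.L1E ^ a) u) (i + s : ℕ) ((V.L1E ^ b) v))
    have hg : ∀ i s a b, M ≤ i + s + a + b → g i s a b = 0 := by
      intro i s a b h
      simp only [g]
      rw [hM a b (i + s) (by omega)]; simp
    have e1 : ∀ i ∈ range M, (∑ c ∈ range M, 
        ((-1 : ℂ) ^ i * cchoose m i) • W.opL (P - (i + c : ℕ))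
          (((Nat.factorial c : ℂ)⁻¹) • (V.L1E ^ c) (V.op u i v)))
        = ∑ a ∈ range M, ∑ b ∈ range M, ∑ s ∈ range M, g i s a b := by
      intro i _
      have e2 : ∀ c ∈ range M, ((-1 : ℂ) ^ i * cchoose m i) • W.opL (P - (i + c : ℕ))
          (((Nat.factorial c : ℂ)⁻¹) • (V.L1E ^ c) (V.op u i v))
          = ∑ p ∈ antidiagonal c, ∑ q ∈ antidiagonal p.1, g i q.2 q.1 p.2 := by
        intro c _
        rw [V.L1_pow_op k i u v hu c, map_sum, smul_sum]
        refine sum_congr rfl fun p hp => ?_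
        rw [map_sum, smul_sum]
        refine sum_congr rfl fun q hq => ?_
        have hp' : p.1 + p.2 = c := by simpa using hp
        have hq' : q.1 + q.2 = p.1 := by simpa using hq
        simp only [g]
        rw [map_smul, smul_smul, show i + c = q.1 + p.2 + (i + q.2) by omega]
        push_cast
        congr 1
        ring
      rw [sum_congr rfl e2, sum_flip M (fun e b => ∑ q ∈ antidiagonal e, g i q.2 q.1 b)]
      · rw [sum_comm]
        have e3 : ∀ b ∈ range M, (∑ e ∈ range M, ∑ q ∈ antidiagonal e, g i q.2 q.1 b)
            = ∑ a ∈ range M, ∑ s ∈ range M, g i s a b := by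
          intro b _
          exact sum_flip M (fun a s => g i s a b) (fun a s h => hg _ _ _ _ (by omega))
        rw [sum_congr rfl e3, sum_comm]
      · intro e b h
        refine sum_eq_zero fun q hq => hg _ _ _ _ ?_
        have hq' : q.1 + q.2 = e := by simpa using hq
        omega
    rw [sum_congr rfl e1, sum_comm]
    refine sum_congr rfl fun a _ => ?_
    rw [sum_comm]
    refine sum_congr rfl fun b _ => ?_
    rw [← sum_flip M (fun i s => g i s a b) (fun i s h => hg _ _ _ _ (by omega))]
    refine sum_congr rfl fun j _ => ?_
    rw [← vandermonde_alt, mul_sum, sum_smul]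
    refine sum_congr rfl fun p hp => ?_
    have hp' : p.1 + p.2 = j := by simpa using hp
    simp only [g]
    rw [hp', show 2 * k - (a : ℤ) - 2 - p.1 = 2 * k - a - p.1 - 2 by ring]
    congr 1
    ring
  rw [hR, hmid, ← hL, neg_sub]

end helpers2

noncomputable section helpers3

open Finset

theorem VOA.L1_Lm1 (V : VOA) (h : ℤ) (v : V.carrier) (hv : v ∈ V.wtSpace h) (i : ℕ) :
    (V.L1E ^ (i + 1)) (V.op V.omega 0 v)
      = V.op V.omega 0 ((V.L1E ^ (i + 1)) v)
        + (((i : ℂ) + 1) * (2 * h - i)) • (V.L1E ^ i) v := by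
  have key : ∀ (g : ℤ) (x : V.carrier), x ∈ V.wtSpace g →
      V.L1E (V.op V.omega 0 x) = V.op V.omega 0 (V.L1E x) + (2 * (g : ℂ)) • x := by
    intro g x hx
    have := V.virasoro 1 (-1) x
    norm_num at this
    rw [V.L_zero g x hx, sub_eq_iff_eq_add] at this
    change V.op V.omega 2 (V.op V.omega 0 x) = V.op V.omega 0 (V.op V.omega 2 x) + _
    rw [this]; module
  induction i with
  | zero =>
    simp only [zero_add, pow_one, pow_zero, Module.End.one_apply]
    rw [key h v hv]; push_cast; congr 2; ring
  | succ i ih =>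
    rw [pow_succ', Module.End.mul_apply, ih, map_add, map_smul,
      key _ _ (V.L1_wt h v hv (i + 1)), ← Module.End.mul_apply, ← Module.End.mul_apply,
      ← pow_succ', ← pow_succ']
    push_cast
    module

theorem neg_two_choose (i : ℕ) : (-1 : ℂ) ^ i * cchoose (-2) i = i + 1 := by
  induction i with
  | zero => simp [cchoose_zero_right]
  | succ s ih =>
    have h := cchoose_succ_mul (-2) s
    have h2 : ((s : ℂ) + 1) ≠ 0 := by exact_mod_cast Nat.succ_ne_zero s
    apply mul_left_cancel₀ h2
    rw [pow_succ]
    push_cast at h ⊢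
    linear_combination (-(-1 : ℂ) ^ s) * h + (s + 2 : ℂ) * ih

theorem WeakModule.op_Lm1 {V : VOA} (W : WeakModule V) (u : V.carrier) (n : ℤ) :
    W.opL n (V.op V.omega 0 u) = (-(n : ℂ)) • W.opL (n - 1) u := by
  have h0 : V.op V.omega 0 u = V.op u (-2) V.one := by
    have := V.L_neg_one u (-1) V.one
    rw [V.create] at this
    simpa using this
  have hz : ∀ k : ℤ, W.op u k 0 = 0 := fun k => (W.op_linear_right u k).map_zero
  ext w
  have h := W.borcherds u V.one w (-2) 0 n
  rw [finsum_range 1] at h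
  · simp only [range_one, sum_singleton, cchoose_zero_right, one_smul, Nat.cast_zero, add_zero,
      zero_add, sub_zero, neg_two_choose, W.one_op] at h
    rw [h0, W.opL_apply, h, LinearMap.smul_apply, W.opL_apply]
    rcases lt_trichotomy n 0 with hn | hn | hn
    · rw [finsum_eq_single _ (-1 - n).toNat]
      · have e : (((-1 - n).toNat : ℕ) : ℤ) = -1 - n := Int.toNat_of_nonneg (by omega)
        have e' : (((-1 - n).toNat : ℕ) : ℂ) = -1 - n := by exact_mod_cast congrArg (Int.cast (R := ℂ)) e
        rw [e, e', if_pos (by ring), if_neg (by omega), smul_zero, sub_zero,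
          show -2 - (-1 - n) = n - 1 by ring]
        congr 1; ring
      · intro i hi
        rw [if_neg (by omega), if_neg (by omega), hz]; simp
    · subst hn
      rw [finsum_eq_zero_of_forall_eq_zero]
      · simp
      · intro i
        rw [if_neg (by omega), if_neg (by omega), hz]; simp
    · rw [finsum_eq_single _ (n - 1).toNat]
      · have e : (((n - 1).toNat : ℕ) : ℤ) = n - 1 := Int.toNat_of_nonneg (by omega)
        have e' : (((n - 1).toNat : ℕ) : ℂ) = n - 1 := by exact_mod_cast congrArg (Int.cast (R := ℂ)) e
        rw [e, e', if_neg (by omega), if_pos (by ring), hz]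
        norm_num
      · intro i hi
        rw [if_neg (by omega), if_neg (by omega), hz]; simp
  · intro a ha
    obtain ⟨b, rfl⟩ := Nat.exists_eq_add_of_le' ha
    rw [cchoose_zero_succ, zero_smul]

theorem WeakModule.th_Lm1 {V : VOA} (W : WeakModule V) (h n : ℤ) (v : V.carrier)
    (hv : v ∈ V.wtSpace h) (M : ℕ) (hM : (V.L1E ^ M) v = 0) :
    W.th (h + 1) n (M + 1) (V.op V.omega 0 v) = (-(n : ℂ)) • W.th h (n - 1) M v := by
  unfold WeakModule.th
  rw [zpow_add₀ (by norm_num), zpow_one, smul_comm (-(n : ℂ)), mul_smul]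
  congr 1
  have e1 : ∀ i ∈ range (M + 1), ((Nat.factorial i : ℂ)⁻¹) •
      W.opL (2 * (h + 1) - n - i - 2) ((V.L1E ^ i) (V.op V.omega 0 v))
      = ((Nat.factorial i : ℂ)⁻¹ * (-(2 * h - n - i))) • W.opL (2 * h - n - i - 1) ((V.L1E ^ i) v)
        + ((Nat.factorial i : ℂ)⁻¹ * (i * (2 * h - i + 1))) •
          W.opL (2 * h - n - i) ((V.L1E ^ (i - 1)) v) := by
    intro i _
    rw [show 2 * (h + 1) - n - (i : ℤ) - 2 = 2 * h - n - i by ring]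
    cases i with
    | zero => 
      simp only [pow_zero, Module.End.one_apply, W.op_Lm1]
      simp
    | succ i =>
      rw [V.L1_Lm1 h v hv i, map_add, map_smul, W.op_Lm1, smul_add, smul_smul, smul_smul]
      push_cast
      congr 2
      rw [show (2 * (h : ℂ) - (i + 1) + 1) = 2 * h - i by ring]
  rw [sum_congr rfl e1, sum_add_distrib, sum_range_succ, hM, map_zero, smul_zero, add_zero,
    sum_range_succ' (fun i : ℕ => ((Nat.factorial i : ℂ)⁻¹ * (i * (2 * h - i + 1))) •
          W.opL (2 * h - n - i) ((V.L1E ^ (i - 1)) v))]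
  simp only [Nat.cast_zero, zero_mul, mul_zero, zero_smul, add_zero, Nat.add_sub_cancel]
  rw [← sum_add_distrib, smul_sum, smul_sum]
  refine sum_congr rfl fun i _ => ?_
  rw [show 2 * h - n - ((i + 1 : ℕ) : ℤ) = 2 * h - n - i - 1 by push_cast; ring,
    show 2 * h - (n - 1) - (i : ℤ) - 2 = 2 * h - n - i - 1 by ring, ← add_smul, smul_smul,
    smul_smul]
  congr 1
  have h1 : (Nat.factorial i : ℂ) ≠ 0 := by exact_mod_cast Nat.factorial_ne_zero i
  have h2 : ((i : ℂ) + 1) ≠ 0 := by exact_mod_cast Nat.succ_ne_zero i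
  rw [Nat.factorial_succ]; push_cast; field_simp; ring

theorem WeakModule.th_add {V : VOA} (W : WeakModule V) (h n : ℤ) (M : ℕ) (u v : V.carrier) :
    W.th h n M (u + v) = W.th h n M u + W.th h n M v := by
  simp only [WeakModule.th, map_add, smul_add, sum_add_distrib]

theorem WeakModule.th_smul {V : VOA} (W : WeakModule V) (h n : ℤ) (M : ℕ) (c : ℂ)
    (u : V.carrier) : W.th h n M (c • u) = c • W.th h n M u := by
  simp only [WeakModule.th, map_smul, smul_comm _ c, ← smul_sum]

theorem WeakModule.th_zero {V : VOA} (W : WeakModule V) (h n : ℤ) (M : ℕ) :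
    W.th h n M 0 = 0 := by
  simp [WeakModule.th]

theorem WeakModule.th_indep {V : VOA} (W : WeakModule V) (h n : ℤ) (M M' : ℕ) (v : V.carrier)
    (hM : ∀ i, M ≤ i → (V.L1E ^ i) v = 0) (hM' : ∀ i, M' ≤ i → (V.L1E ^ i) v = 0) :
    W.th h n M v = W.th h n M' v := by
  unfold WeakModule.th
  congr 1
  rw [← finsum_range M, ← finsum_range M'] <;> intro i hi
  · rw [hM' i hi]; simp
  · rw [hM i hi]; simp

theorem VOA.exists_B (V : VOA) :
    ∃ B : ℤ → ℕ, ∀ h : ℤ, ∀ v ∈ V.wtSpace h, ∀ i, B h ≤ i → (V.L1E ^ i) v = 0 := by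
  obtain ⟨N, hN⟩ := V.exists_bound
  refine ⟨fun h => (h - N + 1).toNat, fun h v hv i hi => hN _ ?_ _ (V.L1_wt h v hv i)⟩
  have := Int.self_le_toNat (h - N + 1)
  have : ((h - N + 1).toNat : ℤ) ≤ i := by exact_mod_cast hi
  omega

/-- A uniform bound for the nilpotency of `L(1)`. -/
def VOA.B (V : VOA) : ℤ → ℕ := V.exists_B.choose

theorem VOA.B_spec (V : VOA) (h : ℤ) (v : V.carrier) (hv : v ∈ V.wtSpace h) (i : ℕ)
    (hi : V.B h ≤ i) : (V.L1E ^ i) v = 0 := V.exists_B.choose_spec h v hv i hi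

/-- The transposed mode as an operator on `W`. -/
def WeakModule.T {V : VOA} (W : WeakModule V) (n : ℤ) (v : V.carrier) : Module.End ℂ W.carrier :=
  ∑ᶠ h : ℤ, W.th h n (V.B h) (V.proj h v)

theorem WeakModule.T_supp {V : VOA} (W : WeakModule V) (n : ℤ) (v : V.carrier) :
    (Function.support fun h : ℤ => W.th h n (V.B h) (V.proj h v)).Finite := by
  refine (V.proj_finite v).subset fun h hh hz => hh ?_
  simp only at hz
  simp only [hz, W.th_zero]

theorem WeakModule.T_add {V : VOA} (W : WeakModule V) (n : ℤ) (u v : V.carrier) :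
    W.T n (u + v) = W.T n u + W.T n v := by
  unfold WeakModule.T
  rw [← finsum_add_distrib (W.T_supp n u) (W.T_supp n v)]
  simp only [(V.proj_linear _).map_add, W.th_add]

theorem WeakModule.T_smul {V : VOA} (W : WeakModule V) (n : ℤ) (c : ℂ) (u : V.carrier) :
    W.T n (c • u) = c • W.T n u := by
  unfold WeakModule.T
  rw [smul_finsum]
  simp only [(V.proj_linear _).map_smul, W.th_smul]

theorem WeakModule.T_hom {V : VOA} (W : WeakModule V) (h n : ℤ) (v : V.carrier)
    (hv : v ∈ V.wtSpace h) (M : ℕ) (hM : ∀ i, M ≤ i → (V.L1E ^ i) v = 0) :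
    W.T n v = W.th h n M v := by
  unfold WeakModule.T
  rw [finsum_eq_single _ h, V.proj_eq h v hv]
  · exact W.th_indep h n _ _ v (V.B_spec h v hv) hM
  · intro g hg
    rw [V.proj_ne h g hg.symm v hv, W.th_zero]

theorem WeakModule.dmode_eq {V : VOA} (W : WeakModule V) (v : V.carrier) (n : ℤ)
    (α : W.carrier → ℂ) (hα : IsLinearMap ℂ α) (w : W.carrier) :
    W.dmode v n α w = α (W.T n v w) := by
  let F : Module.End ℂ W.carrier →ₗ[ℂ] ℂ := (IsLinearMap.mk' α hα).comp (LinearMap.applyₗ w)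
  have hF : ∀ E, F E = α (E w) := fun _ => rfl
  rw [← hF]
  unfold WeakModule.T WeakModule.dmode
  rw [map_finsum F (W.T_supp n v)]
  refine finsum_congr fun h => ?_
  rw [finsum_range (V.B h)]
  · unfold WeakModule.th
    rw [map_smul, map_sum, smul_sum]
    refine sum_congr rfl fun i _ => ?_
    rw [map_smul, hF, V.L1_iterate, W.opL_apply, smul_eq_mul, smul_eq_mul, div_eq_mul_inv,
      mul_assoc]
  · intro i hi
    rw [V.L1_iterate, V.B_spec h _ (V.proj_mem h v) i hi, ← W.opL_apply]
    simp [hα.map_zero]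

theorem VOA.hom_induction (V : VOA) (P : V.carrier → Prop)
    (hadd : ∀ u v, P u → P v → P (u + v)) (hhom : ∀ h : ℤ, ∀ v ∈ V.wtSpace h, P v)
    (v : V.carrier) : P v := by
  rw [← V.proj_sum v]
  exact finsum_induction P (hhom 0 0 (zero_mem _)) hadd (fun h => hhom h _ (V.proj_mem h v))

theorem WeakModule.T_Lm1 {V : VOA} (W : WeakModule V) (n : ℤ) (v : V.carrier) :
    W.T n (V.op V.omega 0 v) = (-(n : ℂ)) • W.T (n - 1) v := by
  induction v using V.hom_induction with
  | hadd u v hu hv =>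
    rw [(V.op_linear_right _ _).map_add, W.T_add, hu, hv, W.T_add, smul_add]
  | hhom h v hv =>
    have h1 : V.op V.omega 0 v ∈ V.wtSpace (h + 1) := by
      have := V.op_wt 2 h 0 _ V.omega_wt v hv
      rwa [show 2 + h - 0 - 1 = h + 1 by ring] at this
    rw [W.T_hom h (n - 1) v hv (max (V.B h) (V.B (h + 1)))
        (fun i hi => V.B_spec h v hv i (le_trans (le_max_left _ _) hi)),
      W.T_hom (h + 1) n _ h1 (max (V.B h) (V.B (h + 1)) + 1)
        (fun i hi => V.B_spec _ _ h1 i (by have := le_max_right (V.B h) (V.B (h + 1)); omega)),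
      W.th_Lm1 h n v hv _ (V.B_spec h v hv _ (le_max_left _ _))]

theorem VOA.op_add_left (V : VOA) (u u' v : V.carrier) (n : ℤ) :
    V.op (u + u') n v = V.op u n v + V.op u' n v := (V.op_linear_left n v).map_add u u'

theorem VOA.op_add_right (V : VOA) (u v v' : V.carrier) (n : ℤ) :
    V.op u n (v + v') = V.op u n v + V.op u n v' := (V.op_linear_right u n).map_add v v'

theorem WeakModule.T_comm {V : VOA} (W : WeakModule V) (m n : ℤ) (u v : V.carrier) :
    ∃ M0 : ℕ, ∀ M, M0 ≤ M → W.T n v * W.T m u - W.T m u * W.T n v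
      = ∑ i ∈ range M, cchoose m i • W.T (m + n - i) (V.op u i v) := by
  induction u using V.hom_induction with
  | hadd u u' hu hu' =>
    obtain ⟨A, hA⟩ := hu
    obtain ⟨A', hA'⟩ := hu'
    refine ⟨max A A', fun M hM => ?_⟩
    have h1 := hA M (le_trans (le_max_left _ _) hM)
    have h2 := hA' M (le_trans (le_max_right _ _) hM)
    simp only [V.op_add_left, W.T_add, smul_add, sum_add_distrib]
    rw [← h1, ← h2]; noncomm_ring
  | hhom k u hu =>
  induction v using V.hom_induction with
  | hadd u u' hu hu' =>
    obtain ⟨A, hA⟩ := hu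
    obtain ⟨A', hA'⟩ := hu'
    refine ⟨max A A', fun M hM => ?_⟩
    have h1 := hA M (le_trans (le_max_left _ _) hM)
    have h2 := hA' M (le_trans (le_max_right _ _) hM)
    simp only [V.op_add_right, W.T_add, smul_add, sum_add_distrib]
    rw [← h1, ← h2]; noncomm_ring
  | hhom l v hv =>
    obtain ⟨N, hN⟩ := V.exists_bound
    refine ⟨max (max (V.B k) (V.B l)) (k + l - N).toNat, fun M hM => ?_⟩
    simp only [max_le_iff] at hM
    obtain ⟨⟨hk, hl⟩, hkl⟩ := hM
    rw [Int.toNat_le] at hkl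
    rw [W.T_hom k m u hu M (fun i hi => V.B_spec k u hu i (hk.trans hi)),
      W.T_hom l n v hv M (fun i hi => V.B_spec l v hv i (hl.trans hi)),
      W.th_comm k l m n u v hu M]
    · refine sum_congr rfl fun i _ => ?_
      have hw : V.op u i v ∈ V.wtSpace (k + l - i - 1) := V.op_wt k l i u hu v hv
      rw [W.T_hom _ _ _ hw M]
      intro c hc
      exact hN _ (by omega) _ (V.L1_wt _ _ hw c)
    · intro a b j h
      exact hN _ (by omega) _
        (V.op_wt (k - a) (l - b) j _ (V.L1_wt k u hu a) _ (V.L1_wt l v hv b))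

end helpers3

/-- For a VOA `V` and any weak `V`-module `W`, the full dual `W*` is a
module for the Lie algebra `g(V) = (V ⊗ ℂ[t,t⁻¹])/im(L(-1)⊗1 + 1⊗d/dt)` with `v(n)`
acting as `v*ₙ`.  Concretely: each `v*ₙ` maps `W*` to `W*` (i.e. preserves linearity),
the action is linear in `v`, it kills the image of `d = L(-1)⊗1 + 1⊗d/dt` (that is,
`(L(-1)v)*ₙ = -n v*_{n-1}`, so the action descends from `V̂` to `g(V) = V̂/dV̂`), and it
respects the bracket `[u(m), v(n)] = Σ_{i≥0} C(m,i) (uᵢv)(m+n-i)` of `g(V)`. -/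
theorem full_dual_is_gV_module (V : VOA) (W : WeakModule V) :
    ∀ α : W.carrier → ℂ, IsLinearMap ℂ α →
      (∀ (v : V.carrier) (n : ℤ), IsLinearMap ℂ (W.dmode v n α)) ∧
      (∀ (u v : V.carrier) (c : ℂ) (n : ℤ) (w : W.carrier),
        W.dmode (u + v) n α w = W.dmode u n α w + W.dmode v n α w ∧
        W.dmode (c • u) n α w = c * W.dmode u n α w) ∧
      (∀ (v : V.carrier) (n : ℤ) (w : W.carrier),
        W.dmode (V.op V.omega 0 v) n α w = (-(n : ℂ)) * W.dmode v (n - 1) α w) ∧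
      (∀ (u v : V.carrier) (m n : ℤ) (w : W.carrier),
        W.dmode u m (W.dmode v n α) w - W.dmode v n (W.dmode u m α) w
          = ∑ᶠ i : ℕ, cchoose m i * W.dmode (V.op u (i : ℤ) v) (m + n - (i : ℤ)) α w) := by
  intro α hα
  have hlin : ∀ (v : V.carrier) (n : ℤ), IsLinearMap ℂ (W.dmode v n α) := by
    intro v n
    refine ⟨fun x y => ?_, fun c x => ?_⟩
    · simp only [W.dmode_eq v n α hα, map_add, hα.map_add]
    · simp only [W.dmode_eq v n α hα, map_smul, hα.map_smul]
  refine ⟨hlin, ?_, ?_, ?_⟩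
  · intro u v c n w
    simp only [W.dmode_eq _ n α hα, W.T_add, W.T_smul, LinearMap.add_apply, LinearMap.smul_apply,
      hα.map_add, hα.map_smul, smul_eq_mul, and_self]
  · intro v n w
    simp only [W.dmode_eq _ _ α hα, W.T_Lm1, LinearMap.smul_apply, hα.map_smul, smul_eq_mul]
  · intro u v m n w
    rw [W.dmode_eq u m _ (hlin v n), W.dmode_eq v n _ (hlin u m)]
    simp only [W.dmode_eq _ _ α hα]
    obtain ⟨M0, hM0⟩ := W.T_comm m n u v
    obtain ⟨N, hN⟩ := V.trunc u v
    have h := hM0 (max M0 N.toNat) (le_max_left _ _)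
    rw [finsum_range (max M0 N.toNat)]
    · have h2 := congrArg (fun E : Module.End ℂ W.carrier => (IsLinearMap.mk' α hα) (E w)) h
      simp only [LinearMap.sub_apply, Module.End.mul_apply, LinearMap.sum_apply,
        LinearMap.smul_apply, map_sub, map_sum, map_smul, IsLinearMap.mk'_apply,
        smul_eq_mul] at h2
      exact h2
    · intro i hi
      rw [hN i (by have := (le_max_right _ _).trans hi; rwa [Int.toNat_le] at this)]
      have h0 : W.T (m + n - i) 0 = 0 := by
        have := W.T_smul (m + n - i) 0 0
        simpa using this
      rw [h0, LinearMap.zero_apply, hα.map_zero, mul_zero]
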